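/- Let 𝒟 = (D_0,…,D_m) be a D-flag of length m with gaps g_1 < … < g_m, and let 𝓜_0 ⊆ 𝓜_1 ⊆ … ⊆ 𝓜_m be a flag of standard modules with D_{𝓜_i} = D_i for all i. Then, writing 𝓜̄ = 𝓜_m/𝔪𝓜_m and 𝓜̄^{(j)} for the image of 𝓜_m ∩ z^j𝒪 in 𝓜̄, one has dim_ℂ(𝓜̄^{(g_i)}/𝓜̄^{(g_i+1)}) = 1 for every 1 ≤ i ≤ m. -/

import Mathlib

open PowerSeries

noncomputable section

/-- `𝒪 = ℂ⟦z⟧`, the ring of formal power series over `ℂ`. -/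
abbrev 𝒪 : Type := PowerSeries ℂ

/-- `ν(f)`: the order of a power series (least `n` with nonzero coefficient);
only meaningful for `f ≠ 0`. -/
noncomputable def ord (f : 𝒪) : ℕ := sInf {n : ℕ | PowerSeries.coeff n f ≠ 0}

/-- The value semigroup `Γ = {ν(x) : 0 ≠ x ∈ ℛ}` of a subalgebra `ℛ ⊆ 𝒪`. -/
def SGamma (R : Subalgebra ℂ 𝒪) : Set ℕ := {n | ∃ x ∈ R, x ≠ (0:𝒪) ∧ ord x = n}

/-- The set of gaps `G = ℕ ∖ Γ`. -/
def Gaps (R : Subalgebra ℂ 𝒪) : Set ℕ := (SGamma R)ᶜ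

/-- `Δ` is a `Γ`-module: `Γ + Δ ⊆ Δ`. -/
def IsGammaModule (Γ Δ : Set ℕ) : Prop := ∀ a ∈ Γ, ∀ d ∈ Δ, a + d ∈ Δ

/-- `Δ_𝓜 = {ν(x) : 0 ≠ x ∈ 𝓜}` for an `ℛ`-submodule `𝓜 ⊆ 𝒪`. -/
def DeltaM (R : Subalgebra ℂ 𝒪) (M : Submodule ↥R 𝒪) : Set ℕ :=
  {n | ∃ x ∈ M, x ≠ (0:𝒪) ∧ ord x = n}

/-- `D_𝓜 = Δ_𝓜 ∩ G`, the set of added gaps. -/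
def Dset (R : Subalgebra ℂ 𝒪) (M : Submodule ↥R 𝒪) : Set ℕ := DeltaM R M ∩ Gaps R

/-- A standard module: a finitely generated `ℛ`-submodule of `𝒪` containing an
element of order `0`. -/
def IsStd (R : Subalgebra ℂ 𝒪) (M : Submodule ↥R 𝒪) : Prop :=
  M.FG ∧ ∃ x ∈ M, x ≠ (0:𝒪) ∧ ord x = 0

/-- `c ≥ 1` is the conductor of `ℛ`: the minimal exponent with `z^c𝒪 ⊆ ℛ`. -/
def HasConductor (R : Subalgebra ℂ 𝒪) (c : ℕ) : Prop :=
  1 ≤ c ∧ (∀ f : 𝒪, (PowerSeries.X : 𝒪)^c * f ∈ R) ∧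
    ∀ c' : ℕ, (∀ f : 𝒪, (PowerSeries.X : 𝒪)^c' * f ∈ R) → c ≤ c'

/-- `z^j𝒪` as a `ℂ`-submodule of `𝒪`. -/
def zO (j : ℕ) : Submodule ℂ 𝒪 :=
  LinearMap.range (LinearMap.mulLeft ℂ ((PowerSeries.X : 𝒪)^j))

/-- `𝔪𝓜` as a `ℂ`-submodule of `𝒪`, where `𝔪 = {x ∈ ℛ : x = 0 or ν(x) > 0}`
is the maximal ideal of `ℛ`. -/
def mSmul (R : Subalgebra ℂ 𝒪) (M : Submodule ↥R 𝒪) : Submodule ℂ 𝒪 :=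
  Submodule.span ℂ {z : 𝒪 | ∃ r ∈ (R : Set 𝒪), ∃ y ∈ M, (r = 0 ∨ 0 < ord r) ∧ z = r * y}

/-- `dim_ℂ (A / B)` for `ℂ`-subspaces; intended for `B ≤ A`. -/
noncomputable def quotDim (A B : Submodule ℂ 𝒪) : ℕ :=
  Module.finrank ℂ (↥A ⧸ Submodule.comap A.subtype B)

/-- `D_i = D_0 ∪ {g_1, …, g_i}` (the gaps `g` are indexed by `1, …, m`). -/
def DFlagSet (D0 : Set ℕ) (g : ℕ → ℕ) (i : ℕ) : Set ℕ := D0 ∪ g '' Set.Icc 1 i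

/-- `(D_0, …, D_m)` with `D_i = D_0 ∪ {g_1 < … < g_i}` is a `D`-flag:
all `Δ_i = Γ ∪ D_i` are `Γ`-modules. -/
def IsDFlag (R : Subalgebra ℂ 𝒪) (m : ℕ) (D0 : Set ℕ) (g : ℕ → ℕ) : Prop :=
  D0 ⊆ Gaps R ∧ StrictMonoOn g (Set.Icc 1 m) ∧
  (∀ i, 1 ≤ i → i ≤ m → g i ∈ Gaps R \ D0) ∧
  (∀ i ≤ m, IsGammaModule (SGamma R) (SGamma R ∪ DFlagSet D0 g i))

/-- A `D`-flag is admissible if it is realized by a flag of standard modules. -/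
def IsAdmissibleFlag (R : Subalgebra ℂ 𝒪) (m : ℕ) (D0 : Set ℕ) (g : ℕ → ℕ) : Prop :=
  ∃ MM : ℕ → Submodule ↥R 𝒪, (∀ i, i < m → MM i ≤ MM (i+1)) ∧
    ∀ i ≤ m, IsStd R (MM i) ∧ Dset R (MM i) = DFlagSet D0 g i

/-- The subalgebra `ℂ[z^a, z^b + z^c] + z^N ℂ⟦z⟧` of `𝒪`. -/
def Rring (a b c N : ℕ) : Subalgebra ℂ 𝒪 where
  carrier := {f : 𝒪 | ∃ p ∈ Algebra.adjoin ℂ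
      ({(PowerSeries.X : 𝒪)^a, (PowerSeries.X : 𝒪)^b + (PowerSeries.X : 𝒪)^c} : Set 𝒪),
    ∃ g : 𝒪, f = p + (PowerSeries.X : 𝒪)^N * g}
  mul_mem' := by
    rintro x y ⟨p, hp, gx, rfl⟩ ⟨q, hq, gy, rfl⟩
    exact ⟨p * q, mul_mem hp hq,
      p * gy + gx * q + (PowerSeries.X : 𝒪)^N * (gx * gy), by ring⟩
  one_mem' := ⟨1, one_mem _, 0, by ring⟩
  add_mem' := by
    rintro x y ⟨p, hp, gx, rfl⟩ ⟨q, hq, gy, rfl⟩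
    exact ⟨p + q, add_mem hp hq, gx + gy, by ring⟩
  zero_mem' := ⟨0, zero_mem _, 0, by ring⟩
  algebraMap_mem' := fun r => ⟨algebraMap ℂ 𝒪 r, Subalgebra.algebraMap_mem _ r, 0, by ring⟩

/-- The ring `ℂ⟦z^4, z^{2u}+z^v⟧ = ℂ[z^4, z^{2u}+z^v] + z^{4u+v}ℂ⟦z⟧` for the
plane curve singularity with Puiseux exponents `(4, 2u, v)`. -/
def Rcal (u v : ℕ) : Subalgebra ℂ 𝒪 := Rring 4 (2*u) v (4*u+v)

/-- The gap counting function `γ_Δ(ℓ) = |[ℓ,∞) ∖ Δ|`. -/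
noncomputable def gapCount (Δ : Set ℕ) (ℓ : ℕ) : ℕ := Set.ncard {k : ℕ | ℓ ≤ k ∧ k ∉ Δ}

/-- `n = n(D)`: the smallest odd number in `(Δ ∪ {v}) ∩ [2u, ∞)`. -/
noncomputable def nOdd (u v : ℕ) (Δ : Set ℕ) : ℕ :=
  sInf {k : ℕ | Odd k ∧ 2*u ≤ k ∧ (k ∈ Δ ∨ k = v)}

/-- The dimension change `μ_{D,g}` of Theorem `dimprop` (for the family `(4,2u,v)`),
where `Γ` is the value semigroup. -/
noncomputable def muDim (u v : ℕ) (Γ : Set ℕ) (D : Set ℕ) (gp : ℕ) : ℕ :=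
  let Δ : Set ℕ := Γ ∪ D
  let Δ' : Set ℕ := Δ ∪ {gp}
  let n : ℕ := nOdd u v Δ
  if gp % 4 = 2 then
    (gapCount Δ' gp - gapCount Δ' (gp+4)) - (gapCount Δ' (gp+n) - gapCount Δ' (gp+4+n))
  else gapCount Δ' gp - gapCount Δ' (gp+4)


theorem mem_zO_iff (j : ℕ) (f : 𝒪) : f ∈ zO j ↔ ∀ n < j, PowerSeries.coeff n f = 0 := by
  rw [← PowerSeries.X_pow_dvd_iff]
  constructor
  · rintro ⟨h, rfl⟩
    exact ⟨h, rfl⟩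
  · rintro ⟨h, rfl⟩
    exact ⟨h, rfl⟩

theorem coeff_ord_ne {f : 𝒪} (hf : f ≠ 0) : PowerSeries.coeff (ord f) f ≠ 0 := by
  have hne : {n : ℕ | PowerSeries.coeff n f ≠ 0}.Nonempty := by
    by_contra h
    apply hf
    ext n
    by_contra h2
    exact h ⟨n, by simpa using h2⟩
  exact Nat.sInf_mem hne

theorem coeff_lt_ord {f : 𝒪} {n : ℕ} (h : n < ord f) : PowerSeries.coeff n f = 0 := by
  by_contra h2
  exact absurd (Nat.sInf_le (s := {n : ℕ | PowerSeries.coeff n f ≠ 0}) h2) (not_le.mpr h)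

theorem ord_eq_of {f : 𝒪} {n : ℕ} (h : PowerSeries.coeff n f ≠ 0)
    (h2 : ∀ k < n, PowerSeries.coeff k f = 0) : f ≠ 0 ∧ ord f = n := by
  have hf : f ≠ 0 := by
    rintro rfl
    simp at h
  refine ⟨hf, le_antisymm ?_ ?_⟩
  · by_contra hlt
    exact h (coeff_lt_ord (not_le.mp hlt))
  · by_contra hlt
    exact coeff_ord_ne hf (h2 _ (not_le.mp hlt))

theorem smul_mem_C (R : Subalgebra ℂ 𝒪) (M : Submodule ↥R 𝒪) (a : ℂ) {x : 𝒪} (hx : x ∈ M) :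
    a • x ∈ M :=
  (M.restrictScalars ℂ).smul_mem a hx

theorem mul_mem_M (R : Subalgebra ℂ 𝒪) (M : Submodule ↥R 𝒪) {r x : 𝒪} (hr : r ∈ R) (hx : x ∈ M) :
    r * x ∈ M :=
  M.smul_mem (⟨r, hr⟩ : R) hx

theorem gamma_sub (R : Subalgebra ℂ 𝒪) (M : Submodule ↥R 𝒪) (h : IsStd R M) :
    SGamma R ⊆ DeltaM R M := by
  rintro n ⟨r, hr, hr0, hn⟩
  obtain ⟨_, u, hu, hu0, hou⟩ := h
  refine ⟨r * u, mul_mem_M R M hr hu, ?_⟩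
  have h0 : PowerSeries.coeff 0 u ≠ 0 := by
    have := coeff_ord_ne hu0
    rwa [hou] at this
  have hrn := coeff_ord_ne hr0
  have hdvd : (PowerSeries.X : 𝒪) ^ n ∣ r :=
    PowerSeries.X_pow_dvd_iff.mpr fun k hk => coeff_lt_ord (hn ▸ hk)
  obtain ⟨s, rfl⟩ := hdvd
  rw [hn] at hrn
  apply ord_eq_of
  · rw [mul_assoc, PowerSeries.coeff_X_pow_mul']
    rw [PowerSeries.coeff_X_pow_mul'] at hrn
    simp only [le_refl, if_true, Nat.sub_self] at hrn ⊢
    rw [PowerSeries.coeff_zero_eq_constantCoeff_apply] at *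
    rw [map_mul]
    exact mul_ne_zero hrn h0
  · exact PowerSeries.X_pow_dvd_iff.mp (Dvd.dvd.mul_right (dvd_mul_right _ _) u)

theorem approx (R : Subalgebra ℂ 𝒪) (N M : Submodule ↥R 𝒪) (hNM : N ≤ M) (g : ℕ)
    (hlow : ∀ k < g, k ∈ DeltaM R M → k ∈ DeltaM R N) {y : 𝒪} (hy : y ∈ M) :
    ∀ k ≤ g, ∃ a ∈ N, ∀ n < k, PowerSeries.coeff n (y - a) = 0 := by
  intro k
  induction k with
  | zero => exact fun _ => ⟨0, N.zero_mem, fun n hn => absurd hn (Nat.not_lt_zero n)⟩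
  | succ k ih =>
    intro hk
    obtain ⟨a, ha, h⟩ := ih (by omega)
    by_cases hc : PowerSeries.coeff k (y - a) = 0
    · refine ⟨a, ha, fun n hn => ?_⟩
      rcases Nat.lt_succ_iff_lt_or_eq.mp hn with h1 | rfl
      · exact h n h1
      · exact hc
    · obtain ⟨b, hb, hb0, hbk⟩ := hlow k (by omega)
        ⟨y - a, M.sub_mem hy (hNM ha), ord_eq_of hc h⟩
      have hbne := coeff_ord_ne hb0
      rw [hbk] at hbne
      refine ⟨a + (PowerSeries.coeff k (y - a) / PowerSeries.coeff k b) • b,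
        N.add_mem ha (smul_mem_C R N _ hb), fun n hn => ?_⟩
      rw [← sub_sub, map_sub, map_smul, smul_eq_mul]
      rcases Nat.lt_succ_iff_lt_or_eq.mp hn with h1 | rfl
      · rw [h n h1, coeff_lt_ord (f := b) (n := n) (by omega)]
        simp
      · rw [div_mul_cancel₀ _ hbne, sub_self]

theorem mSmul_le (R : Subalgebra ℂ 𝒪) (N M : Submodule ↥R 𝒪) (hNM : N ≤ M) (g : ℕ)
    (hlow : ∀ k < g, k ∈ DeltaM R M → k ∈ DeltaM R N) :
    mSmul R M ≤ N.restrictScalars ℂ ⊔ zO (g + 1) := by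
  refine Submodule.span_le.mpr ?_
  rintro _ ⟨r, hr, y, hy, hr0, rfl⟩
  obtain ⟨a, ha, h⟩ := approx R N M hNM g hlow hy g le_rfl
  refine Submodule.mem_sup.mpr ⟨r * a, mul_mem_M R N hr ha, r * (y - a), ?_, by ring⟩
  rw [mem_zO_iff, ← PowerSeries.X_pow_dvd_iff, pow_succ']
  refine mul_dvd_mul ?_ (PowerSeries.X_pow_dvd_iff.mpr h)
  rcases hr0 with rfl | hpos
  · exact dvd_zero _
  · rw [PowerSeries.X_dvd_iff, ← PowerSeries.coeff_zero_eq_constantCoeff_apply]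
    exact coeff_lt_ord hpos

theorem core_dim (R : Subalgebra ℂ 𝒪) (N M : Submodule ↥R 𝒪) (hNM : N ≤ M) (g : ℕ)
    (hlow : ∀ k < g, k ∈ DeltaM R M → k ∈ DeltaM R N)
    (hgM : g ∈ DeltaM R M) (hgN : g ∉ DeltaM R N) :
    quotDim ((M.restrictScalars ℂ ⊓ zO g) ⊔ mSmul R M)
      ((M.restrictScalars ℂ ⊓ zO (g + 1)) ⊔ mSmul R M) = 1 := by
  obtain ⟨x, hx, hx0, hxg⟩ := hgM
  have hxne := coeff_ord_ne hx0
  rw [hxg] at hxne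
  have hxlt : ∀ n < g, PowerSeries.coeff n x = 0 := fun n hn => coeff_lt_ord (hxg ▸ hn)
  unfold quotDim
  rw [finrank_eq_one_iff']
  have hxA : x ∈ (M.restrictScalars ℂ ⊓ zO g) ⊔ mSmul R M :=
    Submodule.mem_sup_left ⟨hx, (mem_zO_iff g x).mpr hxlt⟩
  refine ⟨Submodule.Quotient.mk ⟨x, hxA⟩, ?_, ?_⟩
  · intro h0
    rw [Submodule.Quotient.mk_eq_zero] at h0
    have h1 : x ∈ (M.restrictScalars ℂ ⊓ zO (g + 1)) ⊔ mSmul R M := h0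
    have h2 : x ∈ N.restrictScalars ℂ ⊔ zO (g + 1) :=
      (sup_le (inf_le_right.trans le_sup_right) (mSmul_le R N M hNM g hlow)) h1
    obtain ⟨a, ha, b, hb, rfl⟩ := Submodule.mem_sup.mp h2
    rw [mem_zO_iff] at hb
    apply hgN
    refine ⟨a, ha, ord_eq_of ?_ ?_⟩
    · simpa [hb g (Nat.lt_succ_self g)] using hxne
    · intro k hk
      simpa [hb k (by omega)] using hxlt k hk
  · intro w
    obtain ⟨⟨w, hw⟩, rfl⟩ := Submodule.Quotient.mk_surjective _ w
    obtain ⟨a, ⟨haM, haz⟩, b, hb, rfl⟩ := Submodule.mem_sup.mp hw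
    have haz' := (mem_zO_iff g a).mp haz
    refine ⟨PowerSeries.coeff g a / PowerSeries.coeff g x, ?_⟩
    rw [← Submodule.Quotient.mk_smul, Submodule.Quotient.eq]
    change (PowerSeries.coeff g a / PowerSeries.coeff g x) • x - (a + b) ∈
      (M.restrictScalars ℂ ⊓ zO (g + 1)) ⊔ mSmul R M
    rw [← sub_sub]
    refine Submodule.sub_mem _ (Submodule.mem_sup_left ⟨?_, ?_⟩) (Submodule.mem_sup_right hb)
    · exact M.sub_mem (smul_mem_C R M _ hx) haM
    · refine (mem_zO_iff _ _).mpr fun n hn => ?_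
      rw [map_sub, map_smul, smul_eq_mul]
      rcases Nat.lt_succ_iff_lt_or_eq.mp hn with h1 | rfl
      · rw [hxlt n h1, haz' n h1]
        simp
      · rw [div_mul_cancel₀ _ hxne, sub_self]

/-- For a flag of standard modules realizing a `D`-flag, with `𝓜̄ = 𝓜_m/𝔪𝓜_m`
and `𝓜̄^{(j)}` the image of `𝓜_m ∩ z^j𝒪` in `𝓜̄`, one has
`dim_ℂ(𝓜̄^{(g_i)}/𝓜̄^{(g_i+1)}) = 1` for every `1 ≤ i ≤ m`. (The quotient
`𝓜̄^{(g)}/𝓜̄^{(g+1)}` is encoded as `((𝓜_m ∩ z^g𝒪) + 𝔪𝓜_m)/((𝓜_m ∩ z^{g+1}𝒪) + 𝔪𝓜_m)`.) -/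
theorem statement5 (R : Subalgebra ℂ 𝒪) (c : ℕ) (hR : HasConductor R c)
    (m : ℕ) (D0 : Set ℕ) (g : ℕ → ℕ) (hflag : IsDFlag R m D0 g)
    (MM : ℕ → Submodule ↥R 𝒪)
    (hmono : ∀ i, i < m → MM i ≤ MM (i+1))
    (hstd : ∀ i ≤ m, IsStd R (MM i))
    (hD : ∀ i ≤ m, Dset R (MM i) = DFlagSet D0 g i) :
    ∀ i, 1 ≤ i → i ≤ m →
      quotDim (((MM m).restrictScalars ℂ ⊓ zO (g i)) ⊔ mSmul R (MM m))
              (((MM m).restrictScalars ℂ ⊓ zO (g i + 1)) ⊔ mSmul R (MM m)) = 1 := by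
  intro i hi1 him
  have hle : ∀ j, i - 1 + j ≤ m → MM (i - 1) ≤ MM (i - 1 + j) := by
    intro j
    induction j with
    | zero => exact fun _ => le_rfl
    | succ j ih => exact fun h => (ih (by omega)).trans (hmono _ (by omega))
  have hNM : MM (i - 1) ≤ MM m := by
    have := hle (m - (i - 1)) (by omega)
    rwa [show i - 1 + (m - (i - 1)) = m by omega] at this
  obtain ⟨_, hg, hgap, _⟩ := hflag
  apply core_dim R (MM (i - 1)) (MM m) hNM
  · intro k hk hkM
    by_cases hkG : k ∈ SGamma R
    · exact gamma_sub R _ (hstd _ (by omega)) hkG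
    · have h1 : k ∈ Dset R (MM m) := ⟨hkM, hkG⟩
      rw [hD m le_rfl] at h1
      have h2 : k ∈ Dset R (MM (i - 1)) := by
        rw [hD (i - 1) (by omega)]
        rcases h1 with h1 | ⟨j, hj, rfl⟩
        · exact Or.inl h1
        · have := (hg.lt_iff_lt hj ⟨hi1, him⟩).mp hk
          exact Or.inr ⟨j, ⟨hj.1, by omega⟩, rfl⟩
      exact h2.1
  · have h1 : g i ∈ Dset R (MM m) := by
      rw [hD m le_rfl]
      exact Or.inr ⟨i, ⟨hi1, him⟩, rfl⟩
    exact h1.1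
  · intro h
    have h1 : g i ∈ Dset R (MM (i - 1)) := ⟨h, (hgap i hi1 him).1⟩
    rw [hD (i - 1) (by omega)] at h1
    rcases h1 with h1 | ⟨j, hj, hji⟩
    · exact (hgap i hi1 him).2 h1
    · have h3 := hg.injOn ⟨hj.1, by have := hj.2; omega⟩ ⟨hi1, him⟩ hji
      have := hj.2
      omega

end
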